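/- arXiv:2006.08406 — 3 statements merged into one kernel-verified Lean document; each statement's English description precedes it below -/
import Mathlib

section
/- For all x with 0 < |x| < 1/2 (real x, x not a half-integer multiple), ∑_{k=1}^{∞} ζ(2k+1)·x^{2k+1} = −πx·∫₀¹ (sin(2πxu)/sin(2πx) − u)·cot(πu) du. -/
open Real Complex intervalIntegral

lemma trig_id (u : ℝ) (h : Real.sin (π * u) ≠ 0) (N : ℕ) :
    Real.cot (π * u) = (∑ n ∈ Finset.range N, 2 * Real.sin (2 * π * (n + 1) * u))
      + Real.cos ((2 * N + 1) * π * u) / Real.sin (π * u) := by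
  induction N with
  | zero => simp [Real.cot_eq_cos_div_sin]
  | succ N ih =>
    rw [Finset.sum_range_succ, ih, add_assoc]
    congr 1
    have e1 : (2 * ((N + 1 : ℕ) : ℝ) + 1) * π * u = 2 * π * (N + 1) * u + π * u := by
      push_cast; ring
    have e2 : (2 * (N : ℝ) + 1) * π * u = 2 * π * (N + 1) * u - π * u := by ring
    rw [e1, e2, Real.cos_add, Real.cos_sub]
    field_simp
    ring

lemma coef (x : ℝ) (hx0 : x ≠ 0) (hx : |x| < 1 / 2) (hS : Real.sin (2 * π * x) ≠ 0) (n : ℕ) :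
    ∫ u in (0:ℝ)..1, (Real.sin (2 * π * x * u) / Real.sin (2 * π * x) - u) *
      (2 * Real.sin (2 * π * (n + 1) * u)) = - x ^ 2 / (π * ((n + 1) * ((n + 1) ^ 2 - x ^ 2))) := by
  obtain ⟨h1, h2⟩ := abs_lt.mp hx
  have hn : (0:ℝ) ≤ n := n.cast_nonneg
  set S := Real.sin (2 * π * x) with hSdef
  have hpi := Real.pi_pos
  have hm : x - (n + 1) ≠ 0 := by intro h; linarith
  have hp : x + (n + 1) ≠ 0 := by intro h; linarith
  have hn1 : (n : ℝ) + 1 ≠ 0 := by positivity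
  have hd : ((n:ℝ) + 1) ^ 2 - x ^ 2 ≠ 0 := by
    have : ((n:ℝ) + 1) ^ 2 - x ^ 2 = - ((x - (n+1)) * (x + (n+1))) := by ring
    rw [this]; exact neg_ne_zero.mpr (mul_ne_zero hm hp)
  set a := 2 * π * (x - (n + 1)) with ha
  set b := 2 * π * (x + (n + 1)) with hb
  set c := 2 * π * ((n:ℝ) + 1) with hc
  have ha0 : a ≠ 0 := by positivity
  have hb0 : b ≠ 0 := by positivity
  have hc0 : c ≠ 0 := by positivity
  have hder : ∀ u ∈ Set.uIcc (0:ℝ) 1, HasDerivAt (fun u : ℝ =>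
      (Real.sin (a * u) / a - Real.sin (b * u) / b) / S + 2 * (u * Real.cos (c * u)) / c
        - 2 * Real.sin (c * u) / c ^ 2)
      ((Real.sin (2 * π * x * u) / S - u) * (2 * Real.sin (c * u))) u := by
    intro u _
    have hs : ∀ t : ℝ, HasDerivAt (fun u : ℝ => Real.sin (t * u)) (Real.cos (t * u) * t) u := by
      intro t
      simpa using ((hasDerivAt_id u).const_mul t).sin
    have hcs : HasDerivAt (fun u : ℝ => Real.cos (c * u)) (-Real.sin (c * u) * c) u := by
      simpa using ((hasDerivAt_id u).const_mul c).cos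
    have := (((((hs a).div_const a).sub ((hs b).div_const b)).div_const S).add
      ((((hasDerivAt_id u).mul hcs).const_mul 2).div_const c)).sub
      (((hs c).const_mul 2).div_const (c ^ 2))
    refine this.congr_deriv ?_
    have e1 : a * u = 2 * π * x * u - c * u := by rw [ha, hc]; ring
    have e2 : b * u = 2 * π * x * u + c * u := by rw [hb, hc]; ring
    rw [e1, e2, Real.cos_sub, Real.cos_add]
    simp only [id]
    field_simp
    ring
  rw [integral_eq_sub_of_hasDerivAt hder (by apply Continuous.intervalIntegrable; fun_prop)]
  have sc : Real.sin c = 0 := by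
    have := Real.sin_nat_mul_pi (2 * (n + 1))
    rw [← this]; congr 1; push_cast; rw [hc]; ring
  have cc : Real.cos c = 1 := by
    have := Real.cos_nat_mul_two_pi (n + 1)
    rw [← this]; congr 1; push_cast; rw [hc]; ring
  have sa : Real.sin a = S := by
    have : a = 2 * π * x - c := by rw [ha, hc]; ring
    rw [this, Real.sin_sub, sc, cc]; simp [S]
  have sb : Real.sin b = S := by
    have : b = 2 * π * x + c := by rw [hb, hc]; ring
    rw [this, Real.sin_add, sc, cc]; simp [S]
  simp only [mul_one, mul_zero, Real.sin_zero, sa, sb, sc, cc, zero_mul, zero_div, sub_zero, add_zero]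
  have : - x ^ 2 / (π * ((n + 1) * ((n + 1) ^ 2 - x ^ 2))) =
      x ^ 2 / (π * ((n + 1) * ((x - (n+1)) * (x + (n+1))))) := by
    have : ((n:ℝ) + 1) ^ 2 - x ^ 2 = - ((x - (n+1)) * (x + (n+1))) := by ring
    rw [this]; field_simp
  rw [this, ha, hb, hc]
  field_simp
  ring

lemma sin_lower (u : ℝ) (h0 : 0 ≤ u) (h1 : u ≤ 1) : 2 * min u (1 - u) ≤ Real.sin (π * u) := by
  have hpi := Real.pi_pos
  rcases le_total u (1/2) with h | h
  · have := Real.mul_le_sin (x := π * u) (by positivity) (by nlinarith)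
    have e : 2 / π * (π * u) = 2 * u := by field_simp
    rw [e] at this
    exact (mul_le_mul_of_nonneg_left (min_le_left _ _) (by norm_num)).trans this
  · have := Real.mul_le_sin (x := π * (1 - u)) (by apply mul_nonneg hpi.le; linarith) (by nlinarith)
    have e : 2 / π * (π * (1 - u)) = 2 * (1 - u) := by field_simp
    rw [e, show π * (1 - u) = π - π * u by ring, Real.sin_pi_sub] at this
    exact (mul_le_mul_of_nonneg_left (min_le_right _ _) (by norm_num)).trans this

lemma bnd (x : ℝ) (hS : Real.sin (2 * π * x) ≠ 0) : ∃ C : ℝ, ∀ u ∈ Set.Icc (0:ℝ) 1,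
    |(Real.sin (2 * π * x * u) / Real.sin (2 * π * x) - u) / Real.sin (π * u)| ≤ C := by
  set S := Real.sin (2 * π * x)
  set F := fun u : ℝ => Real.sin (2 * π * x * u) / S - u with hF
  set K : ℝ := |2 * π * x| / |S| + 1
  have hlip : ∀ u v : ℝ, |F u - F v| ≤ K * |u - v| := by
    intro u v
    have h1 : F u - F v = (Real.sin (2 * π * x * u) - Real.sin (2 * π * x * v)) / S - (u - v) := by
      simp only [hF]; ring
    have h2 : |Real.sin (2 * π * x * u) - Real.sin (2 * π * x * v)| ≤ |2 * π * x| * |u - v| := by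
      have := Real.lipschitzWith_sin.dist_le_mul (2 * π * x * u) (2 * π * x * v)
      simp only [Real.dist_eq, NNReal.coe_one, one_mul] at this
      rwa [← mul_sub, abs_mul (2 * π * x)] at this
    rw [h1]
    refine (abs_sub _ _).trans ?_
    rw [abs_div]
    have : |Real.sin (2 * π * x * u) - Real.sin (2 * π * x * v)| / |S| ≤ |2 * π * x| * |u - v| / |S| := by
      gcongr
    calc _ ≤ |2 * π * x| * |u - v| / |S| + |u - v| := by gcongr
      _ = _ := by simp only [K]; ring
  have hK : 0 ≤ K := by positivity
  refine ⟨K / 2, fun u hu => ?_⟩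
  obtain ⟨h0, h1⟩ := hu
  have hmin : |F u| ≤ K * min u (1 - u) := by
    rw [mul_min_of_nonneg _ _ hK]
    refine le_min ?_ ?_
    · have := hlip u 0
      simpa [hF, abs_of_nonneg h0] using this
    · have := hlip u 1
      have e : F 1 = 0 := by simp only [hF, mul_one]; rw [div_self hS]; ring
      rw [e, sub_zero, abs_sub_comm u 1, abs_of_nonneg (by linarith : 0 ≤ 1 - u)] at this
      exact this
  have hsl := sin_lower u h0 h1
  have hm0 : 0 ≤ min u (1 - u) := le_min h0 (by linarith)
  have hs0 : 0 ≤ Real.sin (π * u) := by linarith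
  change |F u / Real.sin (π * u)| ≤ _
  rw [abs_div, abs_of_nonneg hs0]
  apply div_le_of_le_mul₀ hs0 (by positivity)
  nlinarith

lemma rl (g : ℝ → ℝ) (hg : IntervalIntegrable g MeasureTheory.volume 0 1) :
    Filter.Tendsto (fun N : ℕ => ∫ u in (0:ℝ)..1, g u * Real.cos ((2 * N + 1) * π * u))
      Filter.atTop (nhds 0) := by
  have h := Real.tendsto_integral_exp_smul_cocompact
    (fun u : ℝ => Set.indicator (Set.Ioc (0:ℝ) 1) (fun u => (g u : ℂ)) u)
  have hw : Filter.Tendsto (fun N : ℕ => ((N : ℝ) + 1 / 2)) Filter.atTop (Filter.cocompact ℝ) := by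
    rw [cocompact_eq_atBot_atTop]
    exact (Filter.tendsto_atTop_add_const_right _ _ tendsto_natCast_atTop_atTop).mono_right le_sup_right
  have h2 := (Complex.continuous_re.tendsto _).comp (h.comp hw)
  simp only [Complex.zero_re] at h2
  refine h2.congr fun N => ?_
  simp only [Function.comp]
  have hgi : MeasureTheory.IntegrableOn g (Set.Ioc 0 1) :=
    (intervalIntegrable_iff_integrableOn_Ioc_of_le zero_le_one).mp hg
  have hgi2 : MeasureTheory.Integrable
      (fun u : ℝ => Set.indicator (Set.Ioc (0:ℝ) 1) (fun u => (g u : ℂ)) u) :=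
    (MeasureTheory.integrable_indicator_iff measurableSet_Ioc).mpr hgi.ofReal
  have hint := (Real.fourierIntegral_convergent_iff' (innerSL ℝ) ((N : ℝ) + 1 / 2)).2 hgi2
  have e : ∀ v : ℝ, (Real.fourierChar (-(v * ((N:ℝ) + 1 / 2))) • 
      Set.indicator (Set.Ioc (0:ℝ) 1) (fun u => (g u : ℂ)) v).re =
      Set.indicator (Set.Ioc (0:ℝ) 1) (fun u => g u * Real.cos ((2 * N + 1) * π * u)) v := by
    intro v
    by_cases hv : v ∈ Set.Ioc (0:ℝ) 1
    · simp only [Set.indicator_of_mem hv]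
      rw [Circle.smul_def, Real.fourierChar_apply, smul_eq_mul, Complex.re_mul_ofReal,
        Complex.exp_ofReal_mul_I_re, mul_comm, ← Real.cos_neg]
      congr 2; ring
    · simp [Set.indicator_of_notMem hv]
  rw [integral_of_le zero_le_one, ← MeasureTheory.integral_indicator measurableSet_Ioc]
  rw [← MeasureTheory.integral_congr_ae (Filter.Eventually.of_forall e)]
  refine (Complex.reCLM.integral_comp_comm ?_).symm
  refine hint.congr (Filter.Eventually.of_forall fun v => ?_)
  have : (innerSL ℝ v) ((N:ℝ) + 1 / 2) = v * ((N:ℝ) + 1 / 2) := by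
    rw [innerSL_apply_apply, real_inner_eq_re_inner]; simp [mul_comm]
  simp only [this]

lemma lhs (x : ℝ) (hx : |x| < 1 / 2) :
    HasSum (fun n : ℕ => ((x ^ 3 / ((n + 1) * ((n + 1) ^ 2 - x ^ 2)) : ℝ) : ℂ))
    (∑' k : ℕ, riemannZeta (2 * (k + 1) + 1) * ((x : ℂ)) ^ (2 * (k + 1) + 1)) := by
  have hnorm : ∀ n : ℕ, |x / ((n:ℝ) + 1)| < 1 := by
    intro n
    have hn : (0:ℝ) ≤ n := n.cast_nonneg
    rw [abs_div, abs_of_pos (by positivity : (0:ℝ) < n + 1), div_lt_one (by positivity)]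
    linarith
  have hsum : Summable (fun p : ℕ × ℕ => (x / ((p.1:ℝ) + 1)) ^ (2 * p.2 + 3)) := by
    have h1 : Summable (fun n : ℕ => 1 / ((n:ℝ) + 1) ^ 2) := by
      have := (summable_nat_add_iff 1).mpr (Real.summable_one_div_nat_pow.mpr (one_lt_two))
      simpa using this
    have h2 : Summable (fun k : ℕ => |x| ^ k) :=
      summable_geometric_of_lt_one (abs_nonneg _) (by linarith)
    have h3 := h1.mul_of_nonneg h2 (fun n => by positivity) (fun n => by positivity)
    refine Summable.of_norm_bounded h3 fun p => ?_
    obtain ⟨n, k⟩ := p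
    simp only [norm_pow, norm_div, Real.norm_eq_abs]
    have hn : (0:ℝ) ≤ n := n.cast_nonneg
    rw [abs_of_pos (by positivity : (0:ℝ) < n + 1), div_pow, div_mul_eq_mul_div, one_mul]
    gcongr ?_ / ?_
    · exact pow_le_pow_of_le_one (abs_nonneg _) (by linarith) (by omega)
    · exact pow_le_pow_right₀ (by linarith) (by omega)
  have hC : Summable (fun p : ℕ × ℕ => (((x / ((p.1:ℝ) + 1)) ^ (2 * p.2 + 3) : ℝ) : ℂ)) :=
    Complex.ofRealCLM.summable hsum
  have hgeo : ∀ n : ℕ, HasSum (fun k : ℕ => (((x / ((n:ℝ) + 1)) ^ (2 * k + 3) : ℝ) : ℂ))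
      ((x ^ 3 / ((n + 1) * ((n + 1) ^ 2 - x ^ 2)) : ℝ) : ℂ) := by
    intro n
    rw [Complex.hasSum_ofReal]
    have hlt : (x / ((n:ℝ) + 1)) ^ 2 < 1 := by rw [sq_lt_one_iff_abs_lt_one]; exact hnorm n
    have := (hasSum_geometric_of_lt_one (sq_nonneg _) hlt).mul_left ((x / ((n:ℝ) + 1)) ^ 3)
    have hn1 : (n:ℝ) + 1 ≠ 0 := by positivity
    have hd : ((n:ℝ) + 1) ^ 2 - x ^ 2 ≠ 0 := by
      rw [div_pow, div_lt_one (by positivity)] at hlt; linarith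
    have e1 : 1 - (x / ((n:ℝ) + 1)) ^ 2 = (((n:ℝ) + 1) ^ 2 - x ^ 2) / ((n:ℝ) + 1) ^ 2 := by
      field_simp
    have e2 : x ^ 3 / (((n:ℝ) + 1) * ((n + 1) ^ 2 - x ^ 2)) =
        (x / ((n:ℝ) + 1)) ^ 3 * (1 - (x / ((n:ℝ) + 1)) ^ 2)⁻¹ := by
      rw [e1]; field_simp
    rw [e2]
    have e3 : (fun k : ℕ => (x / ((n:ℝ) + 1)) ^ (2 * k + 3)) =
        fun k => (x / ((n:ℝ) + 1)) ^ 3 * ((x / ((n:ℝ) + 1)) ^ 2) ^ k := by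
      funext k; rw [← pow_mul, ← pow_add]; congr 1; ring
    rw [e3]
    exact this
  have hzeta : ∀ k : ℕ, ∑' n : ℕ, (((x / ((n:ℝ) + 1)) ^ (2 * k + 3) : ℝ) : ℂ) =
      riemannZeta (2 * (k + 1) + 1) * ((x : ℂ)) ^ (2 * (k + 1) + 1) := by
    intro k
    have hz := zeta_nat_eq_tsum_of_gt_one (k := 2 * (k + 1) + 1) (by omega)
    push_cast at hz
    rw [hz, ← tsum_mul_right]
    have hs : Summable (fun n : ℕ => 1 / (n : ℂ) ^ (2 * (k + 1) + 1) * (x : ℂ) ^ (2 * (k + 1) + 1)) :=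
      Summable.mul_right _ (by
        have := Complex.ofRealCLM.summable
          (Real.summable_one_div_nat_pow.mpr (by omega : 1 < 2 * (k + 1) + 1))
        simpa using this)
    rw [hs.tsum_eq_zero_add]
    simp only [Nat.cast_zero]
    rw [zero_pow (by omega)]
    simp only [div_zero, zero_mul, zero_add]
    refine tsum_congr fun n => ?_
    push_cast
    rw [div_pow]
    ring
  have e : (∑' k : ℕ, riemannZeta (2 * (k + 1) + 1) * ((x : ℂ)) ^ (2 * (k + 1) + 1)) =
      ∑' p : ℕ × ℕ, (((x / ((p.1:ℝ) + 1)) ^ (2 * p.2 + 3) : ℝ) : ℂ) := by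
    rw [hC.tsum_prod]
    exact (tsum_congr hzeta).symm.trans (Summable.tsum_comm
      (f := fun n k : ℕ => (((x / ((n:ℝ) + 1)) ^ (2 * k + 3) : ℝ) : ℂ)) hC)
  rw [e]
  exact hC.hasSum.prod_fiberwise hgeo

theorem zeta_odd_generating_function (x : ℝ) (hx0 : 0 < |x|) (hx : |x| < 1 / 2) :
    (∑' k : ℕ, riemannZeta (2 * (k + 1) + 1) * ((x : ℂ)) ^ (2 * (k + 1) + 1)) =
      ((-π * x * ∫ u in (0:ℝ)..1,
        (Real.sin (2 * π * x * u) / Real.sin (2 * π * x) - u) * Real.cot (π * u) : ℝ) : ℂ) := by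
  have hpi := Real.pi_pos
  have hx0' : x ≠ 0 := abs_pos.mp hx0
  obtain ⟨h1, h2⟩ := abs_lt.mp hx
  have hS : Real.sin (2 * π * x) ≠ 0 := by
    intro h
    rw [Real.sin_eq_zero_iff_of_lt_of_lt (by nlinarith) (by nlinarith)] at h
    exact hx0' (by simpa [hpi.ne'] using h)
  set F := fun u : ℝ => Real.sin (2 * π * x * u) / Real.sin (2 * π * x) - u with hF
  obtain ⟨C, hC⟩ := bnd x hS
  have hg : IntervalIntegrable (fun u => F u / Real.sin (π * u)) MeasureTheory.volume 0 1 := by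
    rw [intervalIntegrable_iff_integrableOn_Ioc_of_le zero_le_one]
    refine MeasureTheory.Measure.integrableOn_of_bounded (M := C) (by simp) ?_ ?_
    · apply Measurable.aestronglyMeasurable
      simp only [hF]; fun_prop
    · filter_upwards [MeasureTheory.ae_restrict_mem measurableSet_Ioc] with u hu
      exact hC u ⟨hu.1.le, hu.2⟩
  have hgN : ∀ N : ℕ, IntervalIntegrable (fun u => F u / Real.sin (π * u) *
      Real.cos ((2 * N + 1) * π * u)) MeasureTheory.volume 0 1 := fun N =>
    hg.mul_continuousOn (by fun_prop)
  have key : ∀ N : ℕ, ∫ u in (0:ℝ)..1, F u * Real.cot (π * u) =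
      (∑ n ∈ Finset.range N, - x ^ 2 / (π * ((n + 1) * ((n + 1) ^ 2 - x ^ 2))))
      + ∫ u in (0:ℝ)..1, F u / Real.sin (π * u) * Real.cos ((2 * N + 1) * π * u) := by
    intro N
    have hi : ∀ n ∈ Finset.range N, IntervalIntegrable
        (fun u => F u * (2 * Real.sin (2 * π * (n + 1) * u))) MeasureTheory.volume 0 1 := by
      intro n _
      apply Continuous.intervalIntegrable; simp only [hF]; fun_prop
    rw [← Finset.sum_congr rfl (fun n _ => coef x hx0' hx hS n), 
      ← integral_finsetSum hi, ← integral_add _ (hgN N)]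
    · apply integral_congr_ae
      have h1 : ∀ᵐ u : ℝ, u ≠ 1 := by
        simp [MeasureTheory.ae_iff]
      filter_upwards [h1] with u hu1 hu
      rw [Set.uIoc_of_le zero_le_one] at hu
      have hlt : u < 1 := lt_of_le_of_ne hu.2 hu1
      have hs : Real.sin (π * u) ≠ 0 :=
        (Real.sin_pos_of_pos_of_lt_pi (mul_pos hpi hu.1) (by nlinarith)).ne'
      rw [trig_id u hs N, mul_add, Finset.mul_sum]
      congr 1
      ring
    · apply Continuous.intervalIntegrable; simp only [hF]; fun_prop
  have hL := lhs x hx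
  have hL2 := hL.tendsto_sum_nat
  refine tendsto_nhds_unique hL2 ?_
  have hr := ((rl _ hg).const_mul (π * x)).add_const (-π * x * ∫ u in (0:ℝ)..1, F u * Real.cot (π * u))
  rw [mul_zero, zero_add] at hr
  refine ((Complex.continuous_ofReal.tendsto _).comp hr).congr fun N => ?_
  simp only [Function.comp]
  rw [← Complex.ofReal_sum]
  congr 1
  rw [key N, mul_add, Finset.mul_sum]
  have : ∀ n ∈ Finset.range N, x ^ 3 / (((n:ℝ) + 1) * ((n + 1) ^ 2 - x ^ 2)) =
     -π * x * (- x ^ 2 / (π * ((n + 1) * ((n + 1) ^ 2 - x ^ 2)))) := by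
    intro n _
    rw [mul_div_assoc', show -π * x * -x ^ 2 = π * x ^ 3 by ring, mul_div_mul_left _ _ hpi.ne']
  rw [Finset.sum_congr rfl this]
  ring
end

section
/- For every integer k ≥ 0 and real m with |m| > 1 (or |m|=1 and k ≥ 1), ∑_{j=1}^{∞} cos(2πj/m)/j^{2k+1} = ∑_{j=1}^{k} ((-1)^{k-j}/(2k-2j)!)·(2π/m)^{2k-2j}·ζ(2j+1) + ((-1)^k/(2k)!)·(2π/m)^{2k}·log|m| − ((-1)^k/(2(2k)!))·(2π/m)^{2k+1}·∫₀¹ (1-u)^{2k}·cot(πu/m) − m(1-u)·cot(πu) du. -/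
open Real Complex Filter intervalIntegral

noncomputable def cI (n : ℕ) (a : ℝ) : ℝ := ∫ u in (0:ℝ)..1, (1 - u) ^ n * Real.cos (a * u)

lemma cI_base (a : ℝ) : a ^ 2 * cI 1 a = 1 - Real.cos a := by
  have h : ∀ u ∈ Set.uIcc (0:ℝ) 1, HasDerivAt
      (fun u : ℝ => (1 - u) * (a * Real.sin (a * u)) - Real.cos (a * u))
      (a ^ 2 * ((1 - u) ^ 1 * Real.cos (a * u))) u := by
    intro u _
    have h1 : HasDerivAt (fun u : ℝ => a * u) a u := by simpa using (hasDerivAt_id u).const_mul a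
    have h2 : HasDerivAt (fun u : ℝ => 1 - u) (-1) u := by simpa using (hasDerivAt_id u).const_sub 1
    have := (h2.mul ((h1.sin).const_mul a)).sub h1.cos
    refine this.congr_deriv ?_
    ring
  have := integral_eq_sub_of_hasDerivAt h (Continuous.intervalIntegrable (by fun_prop) _ _)
  rw [intervalIntegral.integral_const_mul] at this
  rw [cI, this]; simp; ring

lemma cI_rec (n : ℕ) (a : ℝ) : a ^ 2 * cI (n + 2) a + (n + 2) * (n + 1) * cI n a = n + 2 := by
  have h : ∀ u ∈ Set.uIcc (0:ℝ) 1, HasDerivAt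
      (fun u : ℝ => (1 - u) ^ (n + 2) * (a * Real.sin (a * u))
        - (n + 2) * ((1 - u) ^ (n + 1) * Real.cos (a * u)))
      (a ^ 2 * ((1 - u) ^ (n + 2) * Real.cos (a * u))
        + (n + 2) * (n + 1) * ((1 - u) ^ n * Real.cos (a * u))) u := by
    intro u _
    have h1 : HasDerivAt (fun u : ℝ => a * u) a u := by simpa using (hasDerivAt_id u).const_mul a
    have h2 : HasDerivAt (fun u : ℝ => 1 - u) (-1) u := by simpa using (hasDerivAt_id u).const_sub 1
    have := ((h2.pow (n + 2)).mul ((h1.sin).const_mul a)).sub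
      (((h2.pow (n + 1)).mul h1.cos).const_mul ((n : ℝ) + 2))
    refine this.congr_deriv ?_
    simp only [Pi.pow_apply]
    rw [show n + 2 - 1 = n + 1 by omega, show n + 1 - 1 = n by omega]
    push_cast
    ring
  have := integral_eq_sub_of_hasDerivAt h (Continuous.intervalIntegrable (by fun_prop) _ _)
  rw [intervalIntegral.integral_add (Continuous.intervalIntegrable (by fun_prop) _ _)
    (Continuous.intervalIntegrable (by fun_prop) _ _), intervalIntegral.integral_const_mul,
    intervalIntegral.integral_const_mul] at this
  rw [cI, cI, this]; simp

lemma cI_abs_le (n : ℕ) (a : ℝ) : |cI n a| ≤ 1 := by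
  have := intervalIntegral.norm_integral_le_of_norm_le_const (a := (0:ℝ)) (b := 1) (C := 1)
    (f := fun u => (1 - u) ^ n * Real.cos (a * u)) (by
      intro u hu
      rw [Set.uIoc_of_le zero_le_one] at hu
      rw [norm_mul, norm_pow]
      have h1 : ‖(1 - u)‖ ≤ 1 := by rw [Real.norm_eq_abs, abs_le]; constructor <;> linarith [hu.1, hu.2]
      exact mul_le_one₀ (pow_le_one₀ (norm_nonneg _) h1) (norm_nonneg _) (Real.abs_cos_le_one _))
  simpa [cI] using this

lemma cI_decay (n : ℕ) (a : ℝ) : a ^ 2 * |cI (n + 1) a| ≤ (n + 2) ^ 2 := by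
  have : a ^ 2 * |cI (n + 1) a| = |a ^ 2 * cI (n + 1) a| := by rw [abs_mul, abs_of_nonneg (sq_nonneg a)]
  rw [this]
  rcases n with _ | n
  · rw [cI_base, abs_le]; constructor <;> norm_num <;> linarith [Real.neg_one_le_cos a, Real.cos_le_one a]
  · have h := cI_rec n a
    have h2 := abs_le.1 (cI_abs_le n a)
    have h0 : (0:ℝ) ≤ n := Nat.cast_nonneg n
    have h3 : 0 ≤ ((n:ℝ) + 2) * (n + 1) := by positivity
    push_cast
    rw [abs_le]; constructor <;> nlinarith

lemma cos_taylor (k : ℕ) (a : ℝ) : Real.cos a =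
    ∑ i ∈ Finset.range (k + 1), (-1) ^ i / ((2 * i).factorial : ℝ) * a ^ (2 * i)
    + (-1) ^ (k + 1) / ((2 * k + 1).factorial : ℝ) * a ^ (2 * k + 2) * cI (2 * k + 1) a := by
  induction k with
  | zero => have := cI_base a; simp; linarith
  | succ k ih =>
    rw [Finset.sum_range_succ, ih]
    have h := cI_rec (2 * k + 1) a
    have e1 : ((2 * (k + 1)).factorial : ℝ) = (2 * k + 2) * (2 * k + 1).factorial := by
      rw [show 2 * (k + 1) = (2 * k + 1) + 1 by ring, Nat.factorial_succ]; push_cast; ring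
    have e2 : ((2 * (k + 1) + 1).factorial : ℝ) = (2 * k + 3) * ((2 * k + 2) * (2 * k + 1).factorial) := by
      rw [Nat.factorial_succ, Nat.cast_mul, e1]; push_cast; ring
    have e0 : ((2 * k + 1).factorial : ℝ) ≠ 0 := by positivity
    rw [e1, e2, show 2 * (k + 1) + 1 = 2 * k + 1 + 2 by ring]
    push_cast at h
    have h' : cI (2 * k + 1) a = (2 * k + 3 - a ^ 2 * cI (2 * k + 1 + 2) a) / ((2 * k + 3) * (2 * k + 2)) := by
      field_simp; linarith
    rw [h']
    field_simp
    ring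

lemma cI_summable (n : ℕ) (θ : ℝ) (hθ : θ ≠ 0) :
    Summable (fun j : ℕ => cI (n + 1) (((j : ℝ) + 1) * θ) / ((j : ℝ) + 1)) := by
  have hs : Summable (fun j : ℕ => (((n:ℝ) + 2) ^ 2 / θ ^ 2) * (1 / ((j : ℝ) + 1) ^ 2)) := by
    have := (summable_nat_add_iff 1).2 (Real.summable_one_div_nat_pow.2 (one_lt_two))
    push_cast at this
    exact this.mul_left _
  refine Summable.of_norm_bounded hs fun j => ?_
  have hj : (0:ℝ) < (j:ℝ) + 1 := by positivity
  have h := cI_decay n (((j : ℝ) + 1) * θ)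
  have hθ2 : 0 < θ ^ 2 := by positivity
  rw [norm_div, Real.norm_eq_abs, Real.norm_eq_abs, abs_of_pos hj]
  have h1 : |cI (n + 1) (((j : ℝ) + 1) * θ)| / ((j:ℝ) + 1) ≤ |cI (n + 1) (((j : ℝ) + 1) * θ)| :=
    div_le_self (abs_nonneg _) (by linarith [(Nat.cast_nonneg j : (0:ℝ) ≤ j)])
  refine h1.trans ?_
  rw [div_mul_div_comm, mul_one, le_div_iff₀ (by positivity)]
  linarith [h]

lemma log_series (r t : ℝ) (h0 : 0 ≤ r) (h1 : r < 1) :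
    HasSum (fun n : ℕ => r ^ (n + 1) * Real.cos ((n + 1) * t) / ((n : ℝ) + 1))
      (-Real.log ‖1 - r * Complex.exp (t * Complex.I)‖) := by
  have hz : ‖(r * Complex.exp (t * Complex.I) : ℂ)‖ < 1 := by
    rw [norm_mul, Complex.norm_exp_ofReal_mul_I]; simpa [abs_of_nonneg h0] using h1
  have h := (Complex.hasSum_taylorSeries_neg_log hz)
  have h := (hasSum_nat_add_iff' 1).2 h
  have h := Complex.hasSum_re h
  simp only [Finset.range_one, Finset.sum_singleton, pow_zero, Nat.cast_zero, div_zero, sub_zero,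
    Complex.neg_re, Complex.log_re] at h
  convert h using 2 with n
  rw [mul_pow, ← Complex.exp_nat_mul, show ((n + 1 : ℕ) : ℂ) * (t * Complex.I) = (((n + 1) * t : ℝ) : ℂ) * Complex.I by push_cast; ring,
    ← Complex.ofReal_pow, ← Complex.ofReal_natCast, Complex.div_ofReal_re, Complex.re_ofReal_mul, Complex.exp_ofReal_mul_I_re]
  push_cast; ring

lemma norm_one_sub_exp (t : ℝ) : ‖1 - Complex.exp (t * Complex.I)‖ = |2 * Real.sin (t / 2)| := by
  rw [norm_sub_rev, mul_comm, Complex.norm_exp_I_mul_ofReal_sub_one, Real.norm_eq_abs]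

lemma norm_lower (r t : ℝ) (h0 : 1 / 2 ≤ r) :
    1 / 2 * |2 * Real.sin (t / 2)| ≤ ‖1 - r * Complex.exp (t * Complex.I)‖ := by
  rw [← norm_one_sub_exp]
  have hd : ∀ s : ℝ, ‖1 - s * Complex.exp (t * Complex.I)‖ ^ 2 = 1 - 2 * s * Real.cos t + s ^ 2 := by
    intro s
    rw [← Complex.normSq_eq_norm_sq, Complex.normSq_apply]
    simp [Complex.exp_ofReal_mul_I_re, Complex.exp_ofReal_mul_I_im]
    nlinarith [Real.sin_sq_add_cos_sq t]
  have e1 := hd 1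
  have e2 := hd r
  simp only [Complex.ofReal_one, one_mul] at e1
  refine le_of_sq_le_sq ?_ (norm_nonneg _)
  rw [mul_pow, e1, e2]
  nlinarith [Real.cos_le_one t, sq_nonneg (1 - r), Real.neg_one_le_cos t]

lemma tendsto_log_norm (t : ℝ) (h : Real.sin (t / 2) ≠ 0) :
    Tendsto (fun r : ℝ => -Real.log ‖1 - r * Complex.exp (t * Complex.I)‖) (nhdsWithin 1 (Set.Iio 1))
      (nhds (-Real.log |2 * Real.sin (t / 2)|)) := by
  rw [← norm_one_sub_exp]
  have hc : Continuous (fun r : ℝ => ‖1 - r * Complex.exp (t * Complex.I)‖) := by fun_prop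
  have h2 : ‖1 - ((1 : ℝ) : ℂ) * Complex.exp (t * Complex.I)‖ ≠ 0 := by
    rw [Complex.ofReal_one, one_mul, norm_one_sub_exp]; simpa using h
  have : Tendsto (fun r : ℝ => -Real.log ‖1 - r * Complex.exp (t * Complex.I)‖) (nhds 1)
      (nhds (-Real.log ‖1 - ((1 : ℝ) : ℂ) * Complex.exp (t * Complex.I)‖)) :=
    ((hc.continuousAt (x := 1)).log h2).neg
  simp only [Complex.ofReal_one, one_mul] at this
  exact this.mono_left nhdsWithin_le_nhds

lemma cos_sum_zero (t : ℝ) (h : Real.sin (t / 2) ≠ 0) :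
    Tendsto (fun n : ℕ => ∑ j ∈ Finset.range n, Real.cos ((j + 1) * t) / ((j : ℝ) + 1)) atTop
      (nhds (-Real.log |2 * Real.sin (t / 2)|)) := by
  have hne : Complex.exp (t * Complex.I) ≠ 1 := by
    intro h1
    have := norm_one_sub_exp t
    rw [h1, sub_self, norm_zero] at this
    have := abs_eq_zero.1 this.symm
    exact h (by linarith)
  have hb : ∀ n : ℕ, ‖∑ i ∈ Finset.range n, Complex.exp (t * Complex.I) ^ (i + 1)‖
      ≤ 2 / ‖Complex.exp (t * Complex.I) - 1‖ := by
    intro n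
    simp_rw [pow_succ]
    rw [← Finset.sum_mul, geom_sum_eq hne, norm_mul, norm_div, Complex.norm_exp_ofReal_mul_I, mul_one]
    gcongr
    refine (norm_sub_le _ _).trans ?_
    rw [norm_pow, Complex.norm_exp_ofReal_mul_I]; norm_num
  have ha : Antitone (fun n : ℕ => 1 / ((n : ℝ) + 1)) := by
    intro a b hab
    have : (a : ℝ) ≤ b := by exact_mod_cast hab
    dsimp only
    gcongr
  obtain ⟨L, hL⟩ := cauchySeq_tendsto_of_complete
    (ha.cauchySeq_series_mul_of_tendsto_zero_of_bounded tendsto_one_div_add_atTop_nhds_zero_nat hb)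
  have hL' : Tendsto (fun n : ℕ => ∑ j ∈ Finset.range n, Real.cos ((j + 1) * t) / ((j : ℝ) + 1)) atTop
      (nhds L.re) := by
    have := (Complex.continuous_re.tendsto L).comp hL
    refine this.congr fun n => ?_
    simp only [Function.comp, Complex.re_sum]
    refine Finset.sum_congr rfl fun j _ => ?_
    rw [← Complex.exp_nat_mul, show ((j + 1 : ℕ) : ℂ) * (t * Complex.I) = (((j + 1) * t : ℝ) : ℂ) * Complex.I by push_cast; ring,
      Complex.smul_re, Complex.exp_ofReal_mul_I_re, smul_eq_mul]
    ring
  have hab := Real.tendsto_tsum_powerSeries_nhdsWithin_lt hL'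
  have hid : Tendsto (fun x : ℝ => x) (nhdsWithin 1 (Set.Iio 1)) (nhds 1) :=
    tendsto_id.mono_left nhdsWithin_le_nhds
  have h3 := hid.mul hab
  rw [one_mul] at h3
  have h4 : Tendsto (fun r : ℝ => -Real.log ‖1 - r * Complex.exp (t * Complex.I)‖)
      (nhdsWithin 1 (Set.Iio 1)) (nhds L.re) := by
    refine h3.congr' ?_
    filter_upwards [Ioo_mem_nhdsLT (zero_lt_one' ℝ)] with r hr
    rw [← (log_series r t hr.1.le hr.2).tsum_eq, ← tsum_mul_left]
    refine tsum_congr fun n => ?_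
    rw [pow_succ]; ring
  rw [tendsto_nhds_unique (tendsto_log_norm t h) h4]
  exact hL'

lemma int_series (n : ℕ) (θ r : ℝ) (h0 : 0 ≤ r) (h1 : r < 1) :
    HasSum (fun j : ℕ => r ^ (j + 1) * (cI n (((j : ℝ) + 1) * θ) / ((j : ℝ) + 1)))
      (∫ u in (0:ℝ)..1, (1 - u) ^ n * (-Real.log ‖1 - r * Complex.exp ((θ * u : ℝ) * Complex.I)‖)) := by
  have hsr : Summable (fun j : ℕ => r ^ (j + 1)) :=
    (summable_nat_add_iff 1).2 (summable_geometric_of_lt_one h0 h1)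
  have := intervalIntegral.hasSum_integral_of_dominated_convergence (μ := MeasureTheory.volume)
    (a := 0) (b := 1)
    (F := fun (j : ℕ) (u : ℝ) => (1 - u) ^ n * (r ^ (j + 1) * Real.cos ((j + 1) * (θ * u)) / ((j : ℝ) + 1)))
    (f := fun u : ℝ => (1 - u) ^ n * (-Real.log ‖1 - r * Complex.exp ((θ * u : ℝ) * Complex.I)‖))
    (fun j _ => r ^ (j + 1))
    (fun j => (Continuous.aestronglyMeasurable (by fun_prop)))
    (fun j => MeasureTheory.ae_of_all _ fun u hu => by
      rw [Set.uIoc_of_le zero_le_one] at hu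
      have h2 : ‖(1 - u) ^ n‖ ≤ 1 := by
        rw [norm_pow]
        refine pow_le_one₀ (norm_nonneg _) ?_
        rw [Real.norm_eq_abs, abs_le]; constructor <;> linarith [hu.1, hu.2]
      have hj : (1:ℝ) ≤ (j:ℝ) + 1 := by linarith [(Nat.cast_nonneg j : (0:ℝ) ≤ j)]
      have h3 : ‖r ^ (j + 1) * Real.cos ((j + 1) * (θ * u)) / ((j : ℝ) + 1)‖ ≤ r ^ (j + 1) := by
        rw [norm_div, norm_mul, Real.norm_of_nonneg (by positivity : 0 ≤ r ^ (j + 1)),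
          Real.norm_of_nonneg (by positivity : 0 ≤ (j:ℝ) + 1)]
        refine (div_le_self (by positivity) hj).trans ?_
        exact mul_le_of_le_one_right (by positivity) (Real.abs_cos_le_one _)
      rw [norm_mul]
      exact (mul_le_of_le_one_left (norm_nonneg _) h2).trans h3)
    (MeasureTheory.ae_of_all _ fun u hu => hsr)
    intervalIntegrable_const
    (MeasureTheory.ae_of_all _ fun u hu => (log_series r (θ * u) h0 h1).mul_left _)
  have key : ∀ j : ℕ, (∫ u in (0:ℝ)..1, (1 - u) ^ n * (r ^ (j + 1) * Real.cos ((j + 1) * (θ * u)) / ((j : ℝ) + 1)))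
      = r ^ (j + 1) * (cI n (((j : ℝ) + 1) * θ) / ((j : ℝ) + 1)) := by
    intro j
    rw [cI, ← intervalIntegral.integral_div, ← intervalIntegral.integral_const_mul]
    congr 1
    ext u
    rw [mul_assoc ((j:ℝ) + 1)]; ring
  simp only [key] at this
  exact this

lemma logsin_int (c : ℝ) (hc : 0 < c) :
    IntervalIntegrable (fun u => Real.log (2 * Real.sin (c * u))) MeasureTheory.volume 0 1 := by
  have h := (intervalIntegrable_log_sin (a := 0) (b := c)).comp_mul_left (c := c)
  rw [zero_div, div_self hc.ne'] at h
  have h2 : IntervalIntegrable (fun u => Real.log 2 + Real.log (Real.sin (c * u))) MeasureTheory.volume 0 1 :=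
    intervalIntegrable_const.add h
  have hm : Measurable (fun u => Real.log (2 * Real.sin (c * u))) := by fun_prop
  refine IntervalIntegrable.mono_fun (h2.norm.add h.norm) hm.aestronglyMeasurable ?_
  refine MeasureTheory.ae_of_all _ fun u => ?_
  by_cases hs : Real.sin (c * u) = 0
  · simp [hs]
  · simp only [Function.comp]
    rw [Real.log_mul two_ne_zero hs]
    rw [Real.norm_of_nonneg (by positivity : 0 ≤ ‖Real.log 2 + Real.log (Real.sin (c * u))‖ + ‖Real.log (Real.sin (c * u))‖)]
    linarith [norm_nonneg (Real.log (Real.sin (c * u)))]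

lemma sin_pos_aux (c u : ℝ) (hc : 0 < c) (hcπ : c ≤ π) (h0 : 0 < u) (h1 : u < 1) : 0 < Real.sin (c * u) :=
  Real.sin_pos_of_pos_of_lt_pi (by positivity) (by nlinarith)

lemma int_limit (n : ℕ) (c : ℝ) (hc : 0 < c) (hcπ : c ≤ π) :
    HasSum (fun j : ℕ => cI (n + 1) (((j : ℝ) + 1) * (2 * c)) / ((j : ℝ) + 1))
      (-∫ u in (0:ℝ)..1, (1 - u) ^ (n + 1) * Real.log (2 * Real.sin (c * u))) := by
  have hs := cI_summable n (2 * c) (by positivity)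
  have hev : ∀ᶠ r : ℝ in nhdsWithin 1 (Set.Iio 1), r ∈ Set.Ioo (1 / 2 : ℝ) 1 :=
    Ioo_mem_nhdsLT (by norm_num)
  have t1 : Tendsto (fun r : ℝ => ∑' j : ℕ, r ^ (j + 1) * (cI (n + 1) (((j : ℝ) + 1) * (2 * c)) / ((j : ℝ) + 1)))
      (nhdsWithin 1 (Set.Iio 1)) (nhds (∑' j : ℕ, cI (n + 1) (((j : ℝ) + 1) * (2 * c)) / ((j : ℝ) + 1))) := by
    refine tendsto_tsum_of_dominated_convergence hs.norm ?_ ?_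
    · intro j
      have : Continuous (fun r : ℝ => r ^ (j + 1) * (cI (n + 1) (((j : ℝ) + 1) * (2 * c)) / ((j : ℝ) + 1))) := by
        fun_prop
      have := this.tendsto 1
      rw [one_pow, one_mul] at this
      exact this.mono_left nhdsWithin_le_nhds
    · filter_upwards [hev] with r hr j
      rw [norm_mul]
      refine mul_le_of_le_one_left (norm_nonneg _) ?_
      have : 0 ≤ r := by linarith [hr.1]
      rw [norm_pow, Real.norm_of_nonneg this]
      exact pow_le_one₀ this hr.2.le
  have t2 : Tendsto (fun r : ℝ => ∫ u in (0:ℝ)..1, (1 - u) ^ (n + 1) * (-Real.log ‖1 - r * Complex.exp ((2 * c * u : ℝ) * Complex.I)‖))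
      (nhdsWithin 1 (Set.Iio 1)) (nhds (∫ u in (0:ℝ)..1, (1 - u) ^ (n + 1) * (-Real.log (2 * Real.sin (c * u))))) := by
    refine intervalIntegral.tendsto_integral_filter_of_dominated_convergence
      (fun u => 2 * Real.log 2 + |Real.log (2 * Real.sin (c * u))|) ?_ ?_ ?_ ?_
    · refine Eventually.of_forall fun r => Measurable.aestronglyMeasurable ?_
      fun_prop
    · filter_upwards [hev] with r hr
      filter_upwards [MeasureTheory.volume.ae_ne (1:ℝ)] with u hu1 hu
      rw [Set.uIoc_of_le zero_le_one] at hu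
      have hsin := sin_pos_aux c u hc hcπ hu.1 (lt_of_le_of_ne hu.2 hu1)
      have h2 : ‖(1 - u) ^ (n + 1)‖ ≤ 1 := by
        rw [norm_pow]
        refine pow_le_one₀ (norm_nonneg _) ?_
        rw [Real.norm_eq_abs, abs_le]; constructor <;> linarith [hu.1, hu.2]
      rw [norm_mul]
      refine (mul_le_of_le_one_left (norm_nonneg _) h2).trans ?_
      rw [norm_neg, Real.norm_eq_abs]
      have hl := norm_lower r (2 * c * u) hr.1.le
      rw [show 2 * c * u / 2 = c * u by ring, abs_of_pos (by positivity : 0 < 2 * Real.sin (c * u))] at hl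
      have hup : ‖1 - r * Complex.exp ((2 * c * u : ℝ) * Complex.I)‖ ≤ 2 := by
        refine (norm_sub_le _ _).trans ?_
        have hr0 : 0 ≤ r := by linarith [hr.1]
        rw [norm_mul, Complex.norm_exp_ofReal_mul_I, norm_one, Complex.norm_of_nonneg hr0]
        linarith [hr.2]
      have hpos : 0 < 1 / 2 * (2 * Real.sin (c * u)) := by positivity
      have g1 := Real.log_le_log hpos hl
      have g2 := Real.log_le_log (hpos.trans_le hl) hup
      rw [Real.log_mul (by norm_num) (by positivity), one_div, Real.log_inv] at g1
      have g3 := neg_abs_le (Real.log (2 * Real.sin (c * u)))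
      have g4 := Real.log_pos one_lt_two
      have g5 := abs_nonneg (Real.log (2 * Real.sin (c * u)))
      rw [abs_le]; constructor <;> linarith
    · exact intervalIntegrable_const.add (logsin_int c hc).abs
    · filter_upwards [MeasureTheory.volume.ae_ne (1:ℝ)] with u hu1 hu
      rw [Set.uIoc_of_le zero_le_one] at hu
      have hsin := sin_pos_aux c u hc hcπ hu.1 (lt_of_le_of_ne hu.2 hu1)
      have e : 2 * c * u / 2 = c * u := by ring
      have := tendsto_log_norm (2 * c * u) (by rw [e]; exact hsin.ne')
      rw [e, abs_of_pos (by positivity : 0 < 2 * Real.sin (c * u))] at this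
      exact this.const_mul _
  have h3 := t1.congr' (by
    filter_upwards [hev] with r hr
    exact (int_series (n + 1) (2 * c) r (by linarith [hr.1]) hr.2).tsum_eq)
  have h4 := tendsto_nhds_unique h3 t2
  have h5 := hs.hasSum
  rw [h4] at h5
  simp only [mul_neg, intervalIntegral.integral_neg] at h5
  exact h5

lemma cot_bound (x : ℝ) (h0 : 0 < x) (h1 : x < π) : |Real.cot x - 1 / x| ≤ π ^ 2 / (π - x) := by
  have hs := Real.sin_pos_of_pos_of_lt_pi h0 h1
  have hp := Real.pi_pos
  have hd : 0 < π - x := by linarith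
  have hsin : 2 / π ^ 2 * (x * (π - x)) ≤ Real.sin x := by
    rcases le_total x (π / 2) with h | h
    · refine le_trans ?_ (Real.mul_le_sin h0.le h)
      rw [div_mul_eq_mul_div, div_mul_eq_mul_div, div_le_div_iff₀ (by positivity) hp]
      nlinarith [mul_pos hp (mul_pos h0 h0)]
    · have := Real.mul_le_sin (x := π - x) hd.le (by linarith)
      rw [Real.sin_pi_sub] at this
      refine le_trans ?_ this
      rw [div_mul_eq_mul_div, div_mul_eq_mul_div, div_le_div_iff₀ (by positivity) hp]
      nlinarith [mul_pos hp (mul_pos hd hd)]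
  have hnum : |x * Real.cos x - Real.sin x| ≤ 2 * x ^ 2 := by
    have a1 : 1 - Real.cos x ≤ x := by
      rcases le_total x 2 with h | h
      · nlinarith [Real.one_sub_sq_div_two_le_cos (x := x)]
      · linarith [Real.neg_one_le_cos x]
    have a2 : x - x ^ 2 ≤ Real.sin x := by
      rcases le_total x 1 with h | h
      · nlinarith [Real.sin_gt_sub_cube h0, mul_pos h0 h0, mul_nonneg (mul_pos h0 h0).le (sub_nonneg.2 h)]
      · nlinarith
    have a3 := Real.sin_lt h0
    have a4 := Real.cos_le_one x
    rw [abs_le]; constructor <;> nlinarith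
  have e : Real.cot x - 1 / x = (x * Real.cos x - Real.sin x) / (x * Real.sin x) := by
    rw [Real.cot_eq_cos_div_sin]; field_simp
  rw [e, abs_div, abs_of_pos (mul_pos h0 hs), div_le_div_iff₀ (mul_pos h0 hs) hd]
  have h2 : 2 * (x * (π - x)) ≤ π ^ 2 * Real.sin x := by
    have := mul_le_mul_of_nonneg_left hsin (by positivity : 0 ≤ π ^ 2)
    rw [← mul_assoc, mul_div_cancel₀ _ (by positivity)] at this
    exact this
  nlinarith

lemma f_int (n : ℕ) (c : ℝ) (hc : 0 < c) (hcπ : c ≤ π) (h : c < π ∨ 1 ≤ n) :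
    IntervalIntegrable (fun u => (1 - u) ^ n * Real.cot (c * u) - (π / c) * (1 - u) * Real.cot (π * u))
      MeasureTheory.volume 0 1 := by
  have hp := Real.pi_pos
  obtain ⟨D, hD⟩ : ∃ D : ℝ, ∀ u ∈ Set.Ioo (0:ℝ) 1, (1 - u) ^ n * (π ^ 2 / (π - c * u)) ≤ D := by
    rcases h with h | h
    · refine ⟨π ^ 2 / (π - c), fun u hu => ?_⟩
      have h1 : (1 - u) ^ n ≤ 1 := pow_le_one₀ (by linarith [hu.2]) (by linarith [hu.1])
      have h2 : c * u ≤ c := by nlinarith [hu.1, hu.2]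
      have h3 : 0 < π - c := by linarith
      refine (mul_le_of_le_one_left (div_nonneg (by positivity) (by linarith)) h1).trans ?_
      gcongr
    · refine ⟨π, fun u hu => ?_⟩
      have h0 : 0 < 1 - u := by linarith [hu.2]
      have h1 : (1 - u) ^ n ≤ 1 - u := pow_le_of_le_one h0.le (by linarith [hu.1]) (by omega)
      have h2 : c * u ≤ π * u := by nlinarith [hu.1, hu.2]
      have h3 : 0 < π - c * u := by nlinarith
      rw [mul_div_assoc', div_le_iff₀ h3]
      nlinarith [mul_le_mul_of_nonneg_right h1 (by positivity : 0 ≤ π ^ 2)]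
  have hm : Measurable (fun u => (1 - u) ^ n * Real.cot (c * u) - (π / c) * (1 - u) * Real.cot (π * u)) := by
    simp only [Real.cot_eq_cos_div_sin]
    fun_prop
  refine IntervalIntegrable.mono_fun
    (intervalIntegrable_const (c := D + π ^ 2 / c + (n + 1) / c)) hm.aestronglyMeasurable ?_
  rw [EventuallyLE, Set.uIoc_of_le zero_le_one, MeasureTheory.ae_restrict_iff' measurableSet_Ioc]
  filter_upwards [MeasureTheory.volume.ae_ne (1:ℝ)] with u hu1 hu
  have hu' : u < 1 := lt_of_le_of_ne hu.2 hu1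
  have hu0 := hu.1
  have hv : 0 < 1 - u := by linarith
  have hcu : c * u < π := by nlinarith
  have hpu : π * u < π := by nlinarith
  have b1 := cot_bound (c * u) (by positivity) hcu
  have b2 := cot_bound (π * u) (by positivity) hpu
  have e : (1 - u) ^ n * Real.cot (c * u) - (π / c) * (1 - u) * Real.cot (π * u) =
      (1 - u) ^ n * (Real.cot (c * u) - 1 / (c * u))
      - (π / c) * (1 - u) * (Real.cot (π * u) - 1 / (π * u))
      + ((1 - u) ^ n - (1 - u)) / (c * u) := by
    field_simp; ring
  have t1 : |(1 - u) ^ n * (Real.cot (c * u) - 1 / (c * u))| ≤ D := by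
    rw [abs_mul, abs_of_pos (by positivity : 0 < (1 - u) ^ n)]
    exact (mul_le_mul_of_nonneg_left b1 (by positivity)).trans (hD u ⟨hu0, hu'⟩)
  have t2 : |(π / c) * (1 - u) * (Real.cot (π * u) - 1 / (π * u))| ≤ π ^ 2 / c := by
    rw [abs_mul, abs_of_pos (by positivity : 0 < (π / c) * (1 - u))]
    refine (mul_le_mul_of_nonneg_left b2 (by positivity)).trans (le_of_eq ?_)
    rw [show π - π * u = π * (1 - u) by ring]
    field_simp
  have t3 : |((1 - u) ^ n - (1 - u)) / (c * u)| ≤ (n + 1) / c := by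
    have hb := one_add_mul_le_pow (a := -u) (by linarith) n
    rw [← sub_eq_add_neg] at hb
    have h1 : (1 - u) ^ n ≤ 1 := pow_le_one₀ hv.le (by linarith)
    have hn : (0:ℝ) ≤ n := Nat.cast_nonneg n
    rw [abs_div, abs_of_pos (by positivity : 0 < c * u), div_le_div_iff₀ (by positivity) hc]
    have : |(1 - u) ^ n - (1 - u)| ≤ (n + 1) * u := by
      rw [abs_le]; constructor <;> nlinarith
    nlinarith
  rw [e, Real.norm_eq_abs, Real.norm_eq_abs]
  refine le_trans ?_ (le_abs_self _)
  refine (abs_add_le _ _).trans ?_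
  refine add_le_add ((abs_sub _ _).trans (add_le_add t1 t2)) t3

lemma phi_lim (a : ℝ) (ha : 0 < a) :
    Tendsto (fun u => Real.log (2 * Real.sin (a * u)) - Real.log u) (nhdsWithin 0 (Set.Ioi 0))
      (nhds (Real.log (2 * a))) := by
  have h1 : HasDerivAt (fun u : ℝ => a * u) a 0 := by simpa using (hasDerivAt_id (0:ℝ)).const_mul a
  have h2 := (h1.sin).tendsto_slope_zero_right
  simp only [zero_add, mul_zero, Real.sin_zero, sub_zero, Real.cos_zero, one_mul, smul_eq_mul] at h2
  have h3 := (h2.const_mul 2).log (by positivity)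
  refine h3.congr' ?_
  filter_upwards [Ioo_mem_nhdsGT (by positivity : 0 < π / a)] with u hu
  have hau : a * u < π := by have := hu.2; rw [lt_div_iff₀ ha] at this; linarith
  have := Real.sin_pos_of_pos_of_lt_pi (mul_pos ha hu.1) hau
  rw [← Real.log_div (by positivity) hu.1.ne']
  congr 1
  field_simp

lemma ulog_lim : Tendsto (fun u : ℝ => u * Real.log u) (nhdsWithin 0 (Set.Ioi 0)) (nhds 0) := by
  have := Real.continuous_mul_log.tendsto 0
  simp only [zero_mul] at this
  exact this.mono_left nhdsWithin_le_nhds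

lemma H_zero (n : ℕ) (c : ℝ) (hc : 0 < c) :
    Tendsto (fun u => (1 - u) ^ n * Real.log (2 * Real.sin (c * u)) - (1 - u) * Real.log (2 * Real.sin (π * u)))
      (nhdsWithin 0 (Set.Ioi 0)) (nhds (-Real.log (π / c))) := by
  have hp := Real.pi_pos
  have p1 : Tendsto (fun u : ℝ => (1 - u) ^ n) (nhdsWithin 0 (Set.Ioi 0)) (nhds 1) := by
    have : Continuous (fun u : ℝ => (1 - u) ^ n) := by fun_prop
    have := this.tendsto 0
    simp only [sub_zero, one_pow] at this
    exact this.mono_left nhdsWithin_le_nhds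
  have p2 : Tendsto (fun u : ℝ => (1 - u)) (nhdsWithin 0 (Set.Ioi 0)) (nhds 1) := by
    have : Continuous (fun u : ℝ => (1 - u)) := by fun_prop
    have := this.tendsto 0
    simp only [sub_zero] at this
    exact this.mono_left nhdsWithin_le_nhds
  have p3 : Tendsto (fun u : ℝ => 1 - ∑ i ∈ Finset.range n, (1 - u) ^ i) (nhdsWithin 0 (Set.Ioi 0))
      (nhds (1 - ∑ i ∈ Finset.range n, (1 - 0 : ℝ) ^ i)) := by
    have : Continuous (fun u : ℝ => 1 - ∑ i ∈ Finset.range n, (1 - u) ^ i) := by fun_prop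
    exact (this.tendsto 0).mono_left nhdsWithin_le_nhds
  have := ((p1.mul (phi_lim c hc)).sub (p2.mul (phi_lim π hp))).add (ulog_lim.mul p3)
  rw [one_mul, one_mul, zero_mul, add_zero, ← Real.log_div (by positivity) (by positivity)] at this
  rw [← Real.log_inv, inv_div, show c / π = 2 * c / (2 * π) by field_simp]
  refine this.congr fun u => ?_
  have hg := mul_neg_geom_sum (1 - u) n
  rw [sub_sub_cancel] at hg
  linear_combination (-Real.log u) * hg

lemma flip_lim : Tendsto (fun u : ℝ => 1 - u) (nhdsWithin 1 (Set.Iio 1)) (nhdsWithin 0 (Set.Ioi 0)) := by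
  refine tendsto_nhdsWithin_iff.2 ⟨?_, ?_⟩
  · have : Continuous (fun u : ℝ => (1 - u)) := by fun_prop
    have := this.tendsto 1
    simp only [sub_self] at this
    exact this.mono_left nhdsWithin_le_nhds
  · filter_upwards [self_mem_nhdsWithin] with u hu
    have : u < 1 := hu
    simpa using this

lemma B_one : Tendsto (fun u : ℝ => (1 - u) * Real.log (2 * Real.sin (π * u))) (nhdsWithin 1 (Set.Iio 1)) (nhds 0) := by
  have hid : Tendsto (fun u : ℝ => u) (nhdsWithin 0 (Set.Ioi 0)) (nhds 0) :=
    tendsto_id.mono_left nhdsWithin_le_nhds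
  have h := ((hid.mul (phi_lim π Real.pi_pos)).add ulog_lim).comp flip_lim
  rw [zero_mul, zero_add] at h
  refine h.congr fun u => ?_
  simp only [Function.comp]
  rw [show π * (1 - u) = π - π * u by ring, Real.sin_pi_sub]
  ring

lemma H_one (n : ℕ) (c : ℝ) (hc : 0 < c) (hcπ : c ≤ π) (h : c < π ∨ 1 ≤ n) :
    Tendsto (fun u => (1 - u) ^ n * Real.log (2 * Real.sin (c * u)) - (1 - u) * Real.log (2 * Real.sin (π * u)))
      (nhdsWithin 1 (Set.Iio 1)) (nhds (0 ^ n * Real.log (2 * Real.sin c))) := by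
  rw [← sub_zero (0 ^ n * Real.log (2 * Real.sin c))]
  refine Tendsto.sub ?_ B_one
  rcases hcπ.lt_or_eq with h1 | h1
  · have hs := Real.sin_pos_of_pos_of_lt_pi hc h1
    have hc1 : Continuous (fun u : ℝ => (1 - u) ^ n) := by fun_prop
    have hc2 : Continuous (fun u : ℝ => 2 * Real.sin (c * u)) := by fun_prop
    have h3 := (hc1.tendsto 1).mul ((hc2.tendsto 1).log (by rw [mul_one]; positivity))
    simp only [sub_self, mul_one] at h3
    exact h3.mono_left nhdsWithin_le_nhds
  · obtain ⟨l, rfl⟩ : ∃ l, n = l + 1 := ⟨n - 1, by rcases h with h | h <;> [linarith; omega]⟩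
    subst h1
    have hc1 : Continuous (fun u : ℝ => (1 - u) ^ l) := by fun_prop
    have h3 := ((hc1.tendsto 1).mono_left nhdsWithin_le_nhds).mul B_one
    simp only [mul_zero] at h3
    rw [pow_succ, mul_zero, zero_mul]
    refine h3.congr fun u => ?_
    rw [pow_succ]; ring

lemma B_int : ∫ u in (0:ℝ)..1, Real.log (2 * Real.sin (π * u)) = 0 := by
  have h := (intervalIntegrable_log_sin (a := 0) (b := π)).comp_mul_left (c := π)
  rw [zero_div, div_self Real.pi_pos.ne'] at h
  have e : ∫ u in (0:ℝ)..1, Real.log (2 * Real.sin (π * u))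
      = ∫ u in (0:ℝ)..1, (Real.log 2 + (Real.log ∘ Real.sin) (π * u)) := by
    refine intervalIntegral.integral_congr_ae ?_
    filter_upwards [MeasureTheory.volume.ae_ne (1:ℝ)] with u hu1 hu
    rw [Set.uIoc_of_le zero_le_one] at hu
    have := sin_pos_aux π u Real.pi_pos le_rfl hu.1 (lt_of_le_of_ne hu.2 hu1)
    rw [Real.log_mul two_ne_zero this.ne']; rfl
  rw [e, intervalIntegral.integral_add intervalIntegrable_const h,
    intervalIntegral.integral_comp_mul_left _ Real.pi_pos.ne']
  simp only [Function.comp, mul_zero, mul_one, integral_log_sin_zero_pi]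
  simp
  field_simp
  ring

lemma ibp (n : ℕ) (c : ℝ) (hc : 0 < c) (hcπ : c ≤ π) (h : c < π ∨ 1 ≤ n) :
    c * ∫ u in (0:ℝ)..1, ((1 - u) ^ n * Real.cot (c * u) - (π / c) * (1 - u) * Real.cot (π * u))
    = 0 ^ n * Real.log (2 * Real.sin c) + Real.log (π / c)
      + n * ∫ u in (0:ℝ)..1, (1 - u) ^ (n - 1) * Real.log (2 * Real.sin (c * u)) := by
  have hA : IntervalIntegrable (fun u => (1 - u) ^ (n - 1) * Real.log (2 * Real.sin (c * u))) MeasureTheory.volume 0 1 :=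
    (logsin_int c hc).continuousOn_mul (by fun_prop)
  have hB := logsin_int π Real.pi_pos
  have hf := f_int n c hc hcπ h
  have hd : ∀ u ∈ Set.Ioo (0:ℝ) 1, HasDerivAt
      (fun u => (1 - u) ^ n * Real.log (2 * Real.sin (c * u)) - (1 - u) * Real.log (2 * Real.sin (π * u)))
      (c * ((1 - u) ^ n * Real.cot (c * u) - (π / c) * (1 - u) * Real.cot (π * u))
        - n * ((1 - u) ^ (n - 1) * Real.log (2 * Real.sin (c * u)))
        + Real.log (2 * Real.sin (π * u))) u := by
    intro u hu
    have h2 : HasDerivAt (fun u : ℝ => 1 - u) (-1) u := by simpa using (hasDerivAt_id u).const_sub 1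
    have hl : ∀ a : ℝ, 0 < a → a ≤ π →
        HasDerivAt (fun u : ℝ => Real.log (2 * Real.sin (a * u))) (a * Real.cot (a * u)) u := by
      intro a ha haπ
      have hs := sin_pos_aux a u ha haπ hu.1 hu.2
      have h1 : HasDerivAt (fun u : ℝ => a * u) a u := by simpa using (hasDerivAt_id u).const_mul a
      refine ((h1.sin.const_mul 2).log (by positivity)).congr_deriv ?_
      rw [Real.cot_eq_cos_div_sin]; field_simp
    refine (((h2.pow n).mul (hl c hc hcπ)).sub (h2.mul (hl π Real.pi_pos le_rfl))).congr_deriv ?_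
    simp only [Pi.pow_apply]
    field_simp
    ring
  have := integral_eq_sub_of_hasDerivAt_of_tendsto zero_lt_one hd
    (((hf.const_mul c).sub (hA.const_mul n)).add hB) (H_zero n c hc) (H_one n c hc hcπ h)
  rw [intervalIntegral.integral_add ((hf.const_mul c).sub (hA.const_mul n)) hB,
    intervalIntegral.integral_sub (hf.const_mul c) (hA.const_mul n), B_int,
    intervalIntegral.integral_const_mul, intervalIntegral.integral_const_mul] at this
  linarith

noncomputable def zR (p : ℕ) : ℝ := ∑' n : ℕ, 1 / ((n : ℝ) + 1) ^ p

lemma zR_hasSum (p : ℕ) (hp : 1 < p) : HasSum (fun n : ℕ => 1 / ((n : ℝ) + 1) ^ p) (zR p) := by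
  have := (summable_nat_add_iff 1).2 (Real.summable_one_div_nat_pow.2 hp)
  push_cast at this
  exact this.hasSum

lemma zR_zeta (p : ℕ) (hp : 1 < p) : ((zR p : ℝ) : ℂ) = riemannZeta p := by
  rw [zeta_eq_tsum_one_div_nat_add_one_cpow (by simpa using hp), zR, Complex.ofReal_tsum]
  refine tsum_congr fun n => ?_
  push_cast
  rw [Complex.cpow_natCast]

lemma main_succ (K : ℕ) (c : ℝ) (hc : 0 < c) (hcπ : c ≤ π) :
    HasSum (fun j : ℕ => Real.cos ((j + 1) * (2 * c)) / ((j : ℝ) + 1) ^ (2 * (K + 1) + 1))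
      (∑ i ∈ Finset.range (K + 1), (-1) ^ i / ((2 * i).factorial : ℝ) * (2 * c) ^ (2 * i) * zR (2 * (K - i) + 3)
        + (-1) ^ (K + 1) / ((2 * K + 1).factorial : ℝ) * (2 * c) ^ (2 * K + 2)
          * (-∫ u in (0:ℝ)..1, (1 - u) ^ (2 * K + 1) * Real.log (2 * Real.sin (c * u)))) := by
  have h1 : HasSum (fun j : ℕ => ∑ i ∈ Finset.range (K + 1), (-1) ^ i / ((2 * i).factorial : ℝ) * (2 * c) ^ (2 * i)
      * (1 / ((j : ℝ) + 1) ^ (2 * (K - i) + 3)))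
      (∑ i ∈ Finset.range (K + 1), (-1) ^ i / ((2 * i).factorial : ℝ) * (2 * c) ^ (2 * i) * zR (2 * (K - i) + 3)) :=
    hasSum_sum fun i _ => (zR_hasSum _ (by omega)).mul_left _
  have h2 := h1.add ((int_limit (2 * K) c hc hcπ).mul_left
    ((-1) ^ (K + 1) / ((2 * K + 1).factorial : ℝ) * (2 * c) ^ (2 * K + 2)))
  have key : ∀ j : ℕ, Real.cos ((j + 1) * (2 * c)) / ((j : ℝ) + 1) ^ (2 * (K + 1) + 1) =
      ∑ i ∈ Finset.range (K + 1), (-1) ^ i / ((2 * i).factorial : ℝ) * (2 * c) ^ (2 * i)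
        * (1 / ((j : ℝ) + 1) ^ (2 * (K - i) + 3))
      + (-1) ^ (K + 1) / ((2 * K + 1).factorial : ℝ) * (2 * c) ^ (2 * K + 2)
        * (cI (2 * K + 1) (((j : ℝ) + 1) * (2 * c)) / ((j : ℝ) + 1)) := by
    intro j
    have hj : (j : ℝ) + 1 ≠ 0 := by positivity
    rw [cos_taylor K, add_div, Finset.sum_div]
    congr 1
    · refine Finset.sum_congr rfl fun i hi => ?_
      have hi' : i ≤ K := by have := Finset.mem_range.1 hi; omega
      rw [show 2 * (K + 1) + 1 = 2 * i + (2 * (K - i) + 3) by omega, pow_add, mul_pow]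
      field_simp
    · rw [show 2 * (K + 1) + 1 = 2 * K + 2 + 1 by ring, pow_succ _ (2 * K + 2), mul_pow ((j:ℝ) + 1)]
      field_simp
  simp only [key]
  exact h2

lemma main_pos (k : ℕ) (m : ℝ) (hm : 1 < m ∨ (m = 1 ∧ 1 ≤ k)) :
    Tendsto (fun n : ℕ => ∑ j ∈ Finset.range n,
        Real.cos (2 * π * (j + 1) / m) / ((j : ℝ) + 1) ^ (2 * k + 1)) atTop
      (nhds ((∑ j ∈ Finset.Icc 1 k,
          ((-1 : ℝ) ^ (k - j) / (Nat.factorial (2 * k - 2 * j) : ℝ))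
            * (2 * π / m) ^ (2 * k - 2 * j) * zR (2 * j + 1))
        + ((-1 : ℝ) ^ k / (Nat.factorial (2 * k) : ℝ)) * (2 * π / m) ^ (2 * k)
            * Real.log m
        - ((-1 : ℝ) ^ k / (2 * (Nat.factorial (2 * k) : ℝ)))
            * (2 * π / m) ^ (2 * k + 1)
            * (∫ u in (0:ℝ)..1,
                ((1 - u) ^ (2 * k) * Real.cot (π * u / m)
                  - m * (1 - u) * Real.cot (π * u))))) := by
  have hp := Real.pi_pos
  have hm1 : 1 ≤ m := by rcases hm with h | h <;> linarith [h]
  have hm0 : 0 < m := by linarith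
  obtain ⟨c, hcdef⟩ : ∃ c, c = π / m := ⟨_, rfl⟩
  have hc : 0 < c := by rw [hcdef]; positivity
  have hcπ : c ≤ π := by rw [hcdef]; exact div_le_self hp.le hm1
  have hmc : m = π / c := by rw [hcdef]; field_simp
  have hdis : c < π ∨ 1 ≤ 2 * k := by
    rcases hm with h | h
    · left; rw [hcdef]; exact div_lt_self hp h
    · right; omega
  have hI := ibp (2 * k) c hc hcπ hdis
  have e1 : ∀ j : ℕ, 2 * π * ((j:ℝ) + 1) / m = (j + 1) * (2 * c) := by
    intro j; rw [hcdef]; ring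
  have e2 : 2 * π / m = 2 * c := by rw [hcdef]; ring
  have e3 : ∀ u : ℝ, π * u / m = c * u := by intro u; rw [hcdef]; ring
  simp only [e1, e2, e3]
  rw [hmc]
  set J := ∫ u in (0:ℝ)..1, ((1 - u) ^ (2 * k) * Real.cot (c * u) - (π / c) * (1 - u) * Real.cot (π * u)) with hJ
  clear_value J
  rcases k with _ | K
  · have hlt : c < π := by rcases hdis with h | h <;> [exact h; omega]
    have hs := Real.sin_pos_of_pos_of_lt_pi hc hlt
    have hz := cos_sum_zero (2 * c) (by rw [mul_div_cancel_left₀ _ two_ne_zero]; exact hs.ne')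
    rw [mul_div_cancel_left₀ _ two_ne_zero, abs_of_pos (by positivity)] at hz
    simp at hI ⊢
    convert hz using 2
    linarith
  · have hz := (main_succ K c hc hcπ).tendsto_sum_nat
    convert hz using 2
    have hsum : ∑ j ∈ Finset.Icc 1 (K + 1), ((-1 : ℝ) ^ (K + 1 - j) / (Nat.factorial (2 * (K + 1) - 2 * j) : ℝ))
            * (2 * c) ^ (2 * (K + 1) - 2 * j) * zR (2 * j + 1) =
        ∑ i ∈ Finset.range (K + 1), (-1) ^ i / ((2 * i).factorial : ℝ) * (2 * c) ^ (2 * i) * zR (2 * (K - i) + 3) := by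
      refine Finset.sum_nbij' (fun j => K + 1 - j) (fun i => K + 1 - i) ?_ ?_ ?_ ?_ ?_
      · intro j hj; simp only [Finset.mem_Icc, Finset.mem_range] at *; omega
      · intro j hj; simp only [Finset.mem_Icc, Finset.mem_range] at *; omega
      · intro j hj; simp only [Finset.mem_Icc, Finset.mem_range] at *; omega
      · intro j hj; simp only [Finset.mem_Icc, Finset.mem_range] at *; omega
      · intro j hj
        simp only [Finset.mem_Icc] at hj
        rw [show 2 * (K + 1) - 2 * j = 2 * (K + 1 - j) by omega,
          show 2 * (K - (K + 1 - j)) + 3 = 2 * j + 1 by omega]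
    rw [hsum, add_sub_assoc]
    congr 1
    rw [show 2 * (K + 1) - 1 = 2 * K + 1 by omega, zero_pow (by omega), zero_mul, zero_add] at hI
    set A := ∫ u in (0:ℝ)..1, (1 - u) ^ (2 * K + 1) * Real.log (2 * Real.sin (c * u)) with hA
    clear_value A
    have hf : ((2 * (K + 1)).factorial : ℝ) = (2 * K + 2) * (2 * K + 1).factorial := by
      rw [show 2 * (K + 1) = (2 * K + 1) + 1 by ring, Nat.factorial_succ]; push_cast; ring
    have e0 : ((2 * K + 1).factorial : ℝ) ≠ 0 := by positivity
    push_cast at hI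
    have hL : Real.log (π / c) = c * J - 2 * (K + 1) * A := by linarith
    rw [hf, hL, show 2 * (K + 1) = 2 * K + 2 by ring, pow_succ (2 * c) (2 * K + 2)]
    field_simp
    ring

theorem cos_fourier_series_odd (k : ℕ) (m : ℝ)
    (hm : 1 < |m| ∨ (|m| = 1 ∧ 1 ≤ k)) :
    Filter.Tendsto
      (fun n : ℕ => ((∑ j ∈ Finset.range n,
        Real.cos (2 * π * (j + 1) / m) / ((j : ℝ) + 1) ^ (2 * k + 1) : ℝ) : ℂ))
      Filter.atTop
      (nhds (
        (∑ j ∈ Finset.Icc 1 k,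
          ((-1 : ℂ) ^ (k - j) / (Nat.factorial (2 * k - 2 * j) : ℂ))
            * ((2 * π / m : ℝ) : ℂ) ^ (2 * k - 2 * j) * riemannZeta (2 * j + 1))
        + ((-1 : ℂ) ^ k / (Nat.factorial (2 * k) : ℂ)) * ((2 * π / m : ℝ) : ℂ) ^ (2 * k)
            * (Real.log |m| : ℝ)
        - ((-1 : ℂ) ^ k / (2 * (Nat.factorial (2 * k) : ℂ)))
            * ((2 * π / m : ℝ) : ℂ) ^ (2 * k + 1)
            * ((∫ u in (0:ℝ)..1,
                ((1 - u) ^ (2 * k) * Real.cot (π * u / m)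
                  - m * (1 - u) * Real.cot (π * u)) : ℝ) : ℂ))) := by
  have hreal : Tendsto (fun n : ℕ => ∑ j ∈ Finset.range n,
        Real.cos (2 * π * (j + 1) / m) / ((j : ℝ) + 1) ^ (2 * k + 1)) atTop
      (nhds ((∑ j ∈ Finset.Icc 1 k,
          ((-1 : ℝ) ^ (k - j) / (Nat.factorial (2 * k - 2 * j) : ℝ))
            * (2 * π / m) ^ (2 * k - 2 * j) * zR (2 * j + 1))
        + ((-1 : ℝ) ^ k / (Nat.factorial (2 * k) : ℝ)) * (2 * π / m) ^ (2 * k)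
            * Real.log |m|
        - ((-1 : ℝ) ^ k / (2 * (Nat.factorial (2 * k) : ℝ)))
            * (2 * π / m) ^ (2 * k + 1)
            * (∫ u in (0:ℝ)..1,
                ((1 - u) ^ (2 * k) * Real.cot (π * u / m)
                  - m * (1 - u) * Real.cot (π * u))))) := by
    have hpos := main_pos k |m| hm
    rcases abs_choice m with h | h
    · rw [h] at hpos ⊢
      exact hpos
    · obtain ⟨a, ha⟩ : ∃ a, a = |m| := ⟨_, rfl⟩
      have hma : m = -a := by linarith
      rw [← ha] at hpos ⊢
      clear hm ha h
      subst hma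
      have e1 : ∀ x : ℝ, x / -a = -(x / a) := fun x => div_neg x
      have e2 : ∀ x : ℝ, Real.cot (-x) = -Real.cot x := fun x => by
        rw [Real.cot_eq_cos_div_sin, Real.cot_eq_cos_div_sin, Real.cos_neg, Real.sin_neg, div_neg]
      have e3 : ∀ j : ℕ, (-(2 * π / a)) ^ (2 * k - 2 * j) = (2 * π / a) ^ (2 * k - 2 * j) := fun j =>
        Even.neg_pow ⟨k - j, by omega⟩ _
      have e4 : (-(2 * π / a)) ^ (2 * k) = (2 * π / a) ^ (2 * k) := Even.neg_pow ⟨k, by omega⟩ _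
      have e5 : (-(2 * π / a)) ^ (2 * k + 1) = -(2 * π / a) ^ (2 * k + 1) := Odd.neg_pow ⟨k, by omega⟩ _
      have e6 : ∫ u in (0:ℝ)..1, ((1 - u) ^ (2 * k) * Real.cot (π * u / -a)
                  - -a * (1 - u) * Real.cot (π * u)) =
          - ∫ u in (0:ℝ)..1, ((1 - u) ^ (2 * k) * Real.cot (π * u / a)
                  - a * (1 - u) * Real.cot (π * u)) := by
        rw [← intervalIntegral.integral_neg]
        congr 1
        ext u
        rw [e1, e2]; ring
      rw [e6]
      simp only [e1, e3, e4, e5, Real.cos_neg]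
      convert hpos using 2
      ring
  have h := (Complex.continuous_ofReal.tendsto _).comp hreal
  have hz : ∑ j ∈ Finset.Icc 1 k, ((-1 : ℂ) ^ (k - j) / (Nat.factorial (2 * k - 2 * j) : ℂ))
            * ((2 * π / m : ℝ) : ℂ) ^ (2 * k - 2 * j) * riemannZeta (2 * j + 1)
      = ((∑ j ∈ Finset.Icc 1 k, ((-1 : ℝ) ^ (k - j) / (Nat.factorial (2 * k - 2 * j) : ℝ))
            * (2 * π / m) ^ (2 * k - 2 * j) * zR (2 * j + 1) : ℝ) : ℂ) := by
    rw [Complex.ofReal_sum]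
    refine Finset.sum_congr rfl fun j hj => ?_
    have : 1 ≤ j := (Finset.mem_Icc.1 hj).1
    rw [Complex.ofReal_mul, zR_zeta (2 * j + 1) (by omega)]
    push_cast
    rfl
  rw [hz]
  convert h using 2
  · rfl
  rw [Complex.ofReal_sub, Complex.ofReal_add]
  simp only [Complex.ofReal_mul, Complex.ofReal_div, Complex.ofReal_pow, Complex.ofReal_neg,
    Complex.ofReal_one, Complex.ofReal_natCast, Complex.ofReal_ofNat]
end

section
/- For every integer k ≥ 1 and real b with 0 < b < 1: ((2π)^k/(k−1)!)·ζ(1−k, b) = i^{−k}·Li_k(e^{2πib}) + i^{k}·Li_k(e^{−2πib}), where for k = 1 both polylogarithm values are interpreted via Li_1(z) = −log(1−z). -/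
open Real Complex HurwitzZeta

/-- The polylogarithm `Li_k(z) = ∑_{n=1}^∞ z^n/n^k`, with `Li_1(z) = -log (1 - z)`. -/
noncomputable def polylog (k : ℕ) (z : ℂ) : ℂ :=
  if k = 1 then -Complex.log (1 - z) else ∑' n : ℕ, z ^ (n + 1) / ((n : ℂ) + 1) ^ k

lemma expZeta_eq_polylog (k : ℕ) (hk : 2 ≤ k) (b : ℝ) :
    expZeta (b : UnitAddCircle) (k : ℂ) = polylog k (Complex.exp (2 * π * Complex.I * b)) := by
  have h := hasSum_expZeta_of_one_lt_re b (s := (k : ℂ)) (by simp; omega)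
  rw [polylog, if_neg (by omega), ← h.tsum_eq, h.summable.tsum_eq_zero_add]
  have hk0 : k ≠ 0 := by omega
  simp [hk0]
  refine tsum_congr fun n => ?_
  rw [← Complex.exp_nat_mul]
  congr 2
  push_cast
  ring

lemma coe_ne_zero (b : ℝ) (hb0 : 0 < b) (hb1 : b < 1) : (b : UnitAddCircle) ≠ 0 := by
  intro h
  rw [AddCircle.coe_eq_zero_iff] at h
  obtain ⟨n, hn⟩ := h
  simp at hn
  rw [← hn] at hb0 hb1
  have h1 : 0 < n := by exact_mod_cast hb0
  have h2 : n < 1 := by exact_mod_cast hb1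
  omega

lemma case_two (k : ℕ) (hk : 2 ≤ k) (b : ℝ) (hb0 : 0 < b) (hb1 : b < 1) :
    (((2 * π : ℝ) : ℂ) ^ k / (Nat.factorial (k - 1) : ℂ)) *
        hurwitzZeta (b : UnitAddCircle) (1 - (k : ℂ)) =
      Complex.I ^ (-(k : ℤ)) * polylog k (Complex.exp (2 * π * Complex.I * b))
        + Complex.I ^ (k : ℤ) * polylog k (Complex.exp (-(2 * π * Complex.I * b))) := by
  rw [hurwitzZeta_one_sub _ (fun n h => ?_) (Or.inl (coe_ne_zero b hb0 hb1))]
  · have e2 := expZeta_eq_polylog k hk (-b)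
    rw [show (2 * π * Complex.I * ((-b : ℝ) : ℂ)) = -(2 * π * Complex.I * b) by push_cast; ring]
      at e2
    rw [← expZeta_eq_polylog k hk b, ← e2]
    have hG : Complex.Gamma (k : ℂ) = (Nat.factorial (k - 1) : ℂ) := by
      rw [← Complex.Gamma_nat_eq_factorial]
      congr 1
      rw [Nat.cast_sub (by omega)]; simp
    have hI : Complex.exp (π * I * k / 2) = I ^ (k : ℤ) := by
      rw [show (π * I * k / 2 : ℂ) = k * (π / 2 * I) by ring, Complex.exp_nat_mul,
        Complex.exp_pi_div_two_mul_I]; simp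
    have hI' : Complex.exp (-π * I * k / 2) = I ^ (-(k : ℤ)) := by
      rw [show (-π * I * k / 2 : ℂ) = -(π * I * k / 2) by ring, Complex.exp_neg, hI, zpow_neg]
    rw [hG, hI, hI', Complex.cpow_neg, Complex.cpow_natCast]
    have h1 : ((2 * π : ℂ)) ^ k ≠ 0 := by
      apply pow_ne_zero
      simp [Real.pi_ne_zero]
    have h2 : (Nat.factorial (k - 1) : ℂ) ≠ 0 := by exact_mod_cast Nat.factorial_ne_zero _
    push_cast
    rw [← mul_assoc]
    rw [show (2 * (π : ℂ)) ^ k / (Nat.factorial (k - 1) : ℂ) *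
      (((2 * (π : ℂ)) ^ k)⁻¹ * (Nat.factorial (k - 1) : ℂ)) = 1 by field_simp, one_mul]
    rfl
  · have : (k : ℤ) = -(n : ℤ) := by exact_mod_cast h
    omega

lemma log_part (b : ℝ) (hb0 : 0 < b) (hb1 : b < 1) :
    Complex.log (1 - Complex.exp (2 * π * Complex.I * b)) -
    Complex.log (1 - Complex.exp (-(2 * π * Complex.I * b))) = 2 * π * (b - 1 / 2) * I := by
  have key : 1 - Complex.exp (2 * π * Complex.I * b) = ((2 * Real.sin (π * b) : ℝ) : ℂ) *
      (Complex.cos ((π * (b - 1 / 2) : ℝ) : ℂ) + Complex.sin ((π * (b - 1 / 2) : ℝ) : ℂ) * I) := by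
    rw [show (2 * π * Complex.I * b : ℂ) = (2 * (π * b) : ℂ) * I by ring, Complex.exp_mul_I]
    push_cast
    rw [show (π * (b - 1 / 2) : ℂ) = π * b - π / 2 by ring, Complex.cos_sub_pi_div_two,
      Complex.sin_sub_pi_div_two, Complex.cos_two_mul, Complex.sin_two_mul]
    linear_combination (-2 : ℂ) * Complex.sin_sq_add_cos_sq (π * b)
  have hs : 0 < 2 * Real.sin (π * b) := by
    have := Real.sin_pos_of_pos_of_lt_pi (x := π * b) (by positivity) (by nlinarith [Real.pi_pos])
    linarith
  have harg : Complex.arg (1 - Complex.exp (2 * π * Complex.I * b)) = π * (b - 1 / 2) := by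
    rw [key]
    apply Complex.arg_mul_cos_add_sin_mul_I hs
    constructor <;> nlinarith [Real.pi_pos]
  have hc : 1 - Complex.exp (-(2 * π * Complex.I * b)) =
      (starRingEnd ℂ) (1 - Complex.exp (2 * π * Complex.I * b)) := by
    rw [map_sub, ← Complex.exp_conj]
    simp [map_ofNat]
  rw [hc, Complex.log_conj _ (by rw [harg]; nlinarith [Real.pi_pos])]
  have : ∀ z : ℂ, z - (starRingEnd ℂ) z = 2 * z.im * I := by
    intro z; apply Complex.ext <;> simp; ring
  rw [this, Complex.log_im, harg]
  push_cast; ring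

lemma hasDerivAt_shift_cpow (n x : ℝ) (h : 0 < n + x) (r : ℂ) :
    HasDerivAt (fun y : ℝ => ((n : ℂ) + y) ^ r) (r * ((n : ℂ) + x) ^ (r - 1)) x := by
  have h1 : HasDerivAt (fun y : ℂ => (n : ℂ) + y) 1 (x : ℂ) := (hasDerivAt_id _).const_add _
  have h2 := (h1.cpow_const (c := r) (by
    left
    rw [← Complex.ofReal_add, Complex.ofReal_re]; exact h)).comp_ofReal
  simpa using h2

lemma norm_shift_cpow_le (n m x : ℝ) (hn : 0 ≤ n) (hm : 0 < m) (hm1 : m ≤ 1) (hx : m ≤ x)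
    (s : ℂ) (hs : -(1 / 2) < s.re) (hs4 : ‖s‖ < 4) :
    ‖((n : ℂ) + x) ^ (-s - 1 - 1)‖ ≤ m ^ (-6 : ℝ) * (1 / |n + m| ^ (3 / 2 : ℝ)) := by
  have hre : s.re < 4 := lt_of_le_of_lt (Complex.re_le_norm s) hs4
  rw [← Complex.ofReal_add, Complex.norm_cpow_eq_rpow_re_of_pos (by linarith)]
  have h0 : 0 < n + m := by linarith
  have e : (-s - 1 - 1).re = -s.re - 2 := by simp; ring
  rw [e, abs_of_pos h0, one_div, ← Real.rpow_neg h0.le]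
  calc (n + x) ^ (-s.re - 2) ≤ (n + m) ^ (-s.re - 2) :=
        Real.rpow_le_rpow_of_nonpos h0 (by linarith) (by linarith)
    _ = (n + m) ^ (-(s.re + 1 / 2)) * (n + m) ^ (-(3 / 2) : ℝ) := by
        rw [← Real.rpow_add h0]; congr 1; ring
    _ ≤ _ := by
        gcongr
        calc (n + m) ^ (-(s.re + 1 / 2)) ≤ m ^ (-(s.re + 1 / 2)) :=
              Real.rpow_le_rpow_of_nonpos hm (by linarith) (by linarith)
          _ ≤ m ^ (-6 : ℝ) := Real.rpow_le_rpow_of_exponent_ge hm hm1 (by linarith)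

/-- Correction term. -/
noncomputable def gterm (a : ℝ) (n : ℕ) (s : ℂ) : ℂ :=
  (((n : ℝ) : ℂ) + a) ^ (-s) - (((n : ℝ) : ℂ) + (1 - a : ℝ)) ^ (-s)
    - (1 - 2 * a) * ((((n : ℝ) : ℂ) + a) ^ (-s) - (((n : ℝ) : ℂ) + (1 + a : ℝ)) ^ (-s))

lemma gterm_bound (a m : ℝ) (ha0 : 0 < a) (ha1 : a < 1) (hm : 0 < m) (hma : m ≤ a)
    (hma' : m ≤ 1 - a) (n : ℕ) (s : ℂ) (hs : -(1 / 2) < s.re) (hs4 : ‖s‖ < 4) :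
    ‖gterm a n s‖ ≤ 160 * (m ^ (-6 : ℝ) * (1 / |n + m| ^ (3 / 2 : ℝ))) := by
  set B := m ^ (-6 : ℝ) * (1 / |n + m| ^ (3 / 2 : ℝ)) with hB
  have hB0 : 0 ≤ B := by positivity
  have hn : (0 : ℝ) ≤ n := Nat.cast_nonneg n
  let f : ℝ → ℂ := fun y => (((n : ℝ) : ℂ) + y) ^ (-s)
  let f' : ℝ → ℂ := fun y => -s * (((n : ℝ) : ℂ) + y) ^ (-s - 1)
  let S : Set ℝ := Set.Icc m 2
  have hS : Convex ℝ S := convex_Icc _ _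
  have hd : ∀ x ∈ S, HasDerivAt f (f' x) x := fun x hx =>
    hasDerivAt_shift_cpow n x (by linarith [hx.1]) _
  have hd' : ∀ x ∈ S, HasDerivAt f' (-s * ((-s - 1) * (((n : ℝ) : ℂ) + x) ^ (-s - 1 - 1))) x :=
    fun x hx => (hasDerivAt_shift_cpow n x (by linarith [hx.1]) _).const_mul _
  have haS : a ∈ S := ⟨hma, by linarith⟩
  have hb2 : ∀ x ∈ S, ‖f' x - f' a‖ ≤ 40 * B := by
    intro x hx
    have := hS.norm_image_sub_le_of_norm_hasDerivWithin_le (f := f') (C := 20 * B)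
      (fun x hx => (hd' x hx).hasDerivWithinAt) (fun x hx => ?_) haS hx
    · refine this.trans ?_
      have : ‖x - a‖ ≤ 2 := by
        rw [Real.norm_eq_abs, abs_le]; constructor <;> linarith [hx.1, hx.2]
      nlinarith
    · have h1 := norm_shift_cpow_le n m x hn hm (by linarith) hx.1 s hs hs4
      rw [norm_mul, norm_mul, norm_neg]
      have h2 : ‖-s - 1‖ ≤ 5 := by
        calc ‖-s - 1‖ ≤ ‖-s‖ + ‖(1 : ℂ)‖ := norm_sub_le _ _
          _ ≤ 5 := by rw [norm_neg, norm_one]; linarith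
      calc _ ≤ 4 * (5 * B) := by gcongr
        _ = 20 * B := by ring
  let G : ℝ → ℂ := fun y => f y - y * f' a
  have hG : ∀ x ∈ S, HasDerivAt G (f' x - f' a) x := by
    intro x hx
    have h1 : HasDerivAt (fun y : ℝ => (y : ℂ) * f' a) (1 * f' a) x :=
      (hasDerivAt_id (x : ℂ)).comp_ofReal.mul_const _
    rw [one_mul] at h1
    exact (hd x hx).sub h1
  have hGb : ∀ x ∈ S, ‖G a - G x‖ ≤ 80 * B := by
    intro x hx
    refine (hS.norm_image_sub_le_of_norm_hasDerivWithin_le (f := G) (C := 40 * B)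
      (fun x hx => (hG x hx).hasDerivWithinAt) hb2 hx haS).trans ?_
    have : ‖a - x‖ ≤ 2 := by
      rw [Real.norm_eq_abs, abs_le]; constructor <;> linarith [hx.1, hx.2]
    nlinarith
  have e : gterm a n s = (G a - G (1 - a)) - ((1 - 2 * a : ℝ) : ℂ) * (G a - G (1 + a)) := by
    simp only [gterm, G, f]
    push_cast
    ring
  rw [e]
  refine (norm_sub_le _ _).trans ?_
  rw [norm_mul]
  have h1 := hGb (1 - a) ⟨hma', by linarith⟩
  have h2 := hGb (1 + a) ⟨by linarith, by linarith⟩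
  have h3 : ‖((1 - 2 * a : ℝ) : ℂ)‖ ≤ 1 := by
    rw [Complex.norm_real, Real.norm_eq_abs, abs_le]; constructor <;> linarith
  calc _ ≤ 80 * B + 1 * (80 * B) := by gcongr
    _ = 160 * B := by ring

lemma hurwitzZetaOdd_zero (a : ℝ) (ha0 : 0 < a) (ha1 : a < 1) :
    2 * hurwitzZetaOdd (a : UnitAddCircle) 0 = 1 - 2 * a := by
  obtain ⟨m, hm, hma, hma'⟩ : ∃ m, 0 < m ∧ m ≤ a ∧ m ≤ 1 - a :=
    ⟨min a (1 - a), by simp [ha0, ha1], min_le_left _ _, min_le_right _ _⟩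
  let U : Set ℂ := {s | -(1 / 2) < s.re} ∩ Metric.ball 0 4
  have hUo : IsOpen U := (isOpen_lt continuous_const Complex.continuous_re).inter Metric.isOpen_ball
  have hUc : Convex ℝ U := (convex_halfSpace_re_gt _).inter (convex_ball _ _)
  have hsum : Summable fun n : ℕ => 160 * (m ^ (-6 : ℝ) * (1 / |n + m| ^ (3 / 2 : ℝ))) :=
    (((Real.summable_one_div_nat_add_rpow m (3 / 2)).2 (by norm_num)).mul_left _).mul_left _
  have hne : ∀ (n : ℕ) (x : ℝ), 0 < x → (((n : ℝ) : ℂ) + x) ≠ 0 := by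
    intro n x hx
    rw [← Complex.ofReal_add, Complex.ofReal_ne_zero]
    positivity
  have hdp : ∀ (n : ℕ) (x : ℝ), 0 < x →
      Differentiable ℂ (fun s : ℂ => (((n : ℝ) : ℂ) + x) ^ (-s)) := by
    intro n x hx s
    exact differentiableAt_id.neg.const_cpow (Or.inl (hne n x hx))
  have hF : DifferentiableOn ℂ (fun s => ∑' n, gterm a n s) U := by
    refine Complex.differentiableOn_tsum_of_summable_norm hsum (fun n => ?_) hUo ?_
    · exact (((hdp n a ha0).sub (hdp n (1 - a) (by linarith))).sub
        (((hdp n a ha0).sub (hdp n (1 + a) (by linarith))).const_mul _)).differentiableOn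
    · intro n s hs
      exact gterm_bound a m ha0 ha1 hm hma hma' n s hs.1 (by simpa using hs.2)
  have hL : DifferentiableOn ℂ (fun s => 2 * hurwitzZetaOdd (a : UnitAddCircle) s) U :=
    ((differentiable_hurwitzZetaOdd _).const_mul _).differentiableOn
  have hR : DifferentiableOn ℂ
      (fun s => ∑' n, gterm a n s + (1 - 2 * a) * (((0 : ℕ) : ℝ) + (a : ℂ)) ^ (-s)) U :=
    hF.add ((hdp 0 a ha0).const_mul _).differentiableOn
  have hEq : ∀ s : ℂ, 1 < s.re → 2 * hurwitzZetaOdd (a : UnitAddCircle) s =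
      ∑' n, gterm a n s + (1 - 2 * a) * (((0 : ℕ) : ℝ) + (a : ℂ)) ^ (-s) := by
    intro s hs
    have h1 := (hasSum_nat_hurwitzZetaOdd_of_mem_Icc (a := a) ⟨ha0.le, ha1.le⟩ hs).mul_left 2
    have h2 := hasSum_hurwitzZeta_of_one_lt_re (a := a) ⟨ha0.le, ha1.le⟩ hs
    have h3 := (hasSum_nat_add_iff' 1).2 h2
    have h4 := h1.sub ((h2.sub h3).mul_left (1 - 2 * (a : ℂ)))
    have h5 : HasSum (fun n => gterm a n s) _ := h4.congr_fun (fun n => ?_)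
    · rw [h5.tsum_eq]
      simp [Complex.cpow_neg]
    · simp only [gterm, Complex.cpow_neg, one_div]
      push_cast
      rw [show (n : ℂ) + (1 - a) = n + 1 - a by ring, show (n : ℂ) + (1 + a) = n + 1 + a by ring]
      ring
  have h2U : (2 : ℂ) ∈ U := by
    constructor
    · simp; norm_num
    · simp; norm_num
  have h0U : (0 : ℂ) ∈ U := by
    constructor <;> simp
  have hev : (fun s => 2 * hurwitzZetaOdd (a : UnitAddCircle) s) =ᶠ[nhds (2 : ℂ)]
      (fun s => ∑' n, gterm a n s + (1 - 2 * a) * (((0 : ℕ) : ℝ) + (a : ℂ)) ^ (-s)) := by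
    have : {s : ℂ | 1 < s.re} ∈ nhds (2 : ℂ) :=
      (isOpen_lt continuous_const Complex.continuous_re).mem_nhds (by simp)
    filter_upwards [this] with s hs using hEq s hs
  have := (hL.analyticOnNhd hUo).eqOn_of_preconnected_of_eventuallyEq (hR.analyticOnNhd hUo)
    hUc.isPreconnected h2U hev h0U
  simpa [gterm] using this

theorem hurwitz_formula (k : ℕ) (hk : 1 ≤ k) (b : ℝ) (hb0 : 0 < b) (hb1 : b < 1) :
    (((2 * π : ℝ) : ℂ) ^ k / (Nat.factorial (k - 1) : ℂ)) *
        hurwitzZeta (b : UnitAddCircle) (1 - (k : ℂ)) =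
      Complex.I ^ (-(k : ℤ)) * polylog k (Complex.exp (2 * π * Complex.I * b))
        + Complex.I ^ (k : ℤ) * polylog k (Complex.exp (-(2 * π * Complex.I * b))) := by
  rcases Nat.lt_or_ge 1 k with h | h
  · exact case_two k h b hb0 hb1
  · obtain rfl : k = 1 := by omega
    have hl := log_part b hb0 hb1
    have ho := hurwitzZetaOdd_zero b hb0 hb1
    simp only [polylog, if_true, hurwitzZeta, Nat.cast_one, sub_self,
      hurwitzZetaEven_apply_zero, if_neg (coe_ne_zero b hb0 hb1), Nat.factorial_zero, pow_one,
      zpow_neg, zpow_one, Complex.inv_I, zero_add, div_one]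
    push_cast
    linear_combination (π : ℂ) * ho - I * hl - 2 * π * (b - 1 / 2) * Complex.I_sq
end
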